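/- arXiv:2409.10087 — 5 statements merged into one kernel-verified Lean document; each statement's English description precedes it below -/
import Mathlib

section
/- Let n ≥ 1 and let K : T → M_n(ℝ) be continuous on the triangle T = {(x,y) ∈ [0,1]² : x ≤ y}. Then there exists a continuous L : T → M_n(ℝ) such that for every continuous u : [0,1] → ℝⁿ, defining (Tu)(x) = u(x) + ∫_x^1 K(x,y) u(y) dy, one has u(x) = (Tu)(x) + ∫_x^1 L(x,y) (Tu)(y) dy for all x ∈ [0,1]. In particular, the map u ↦ Tu is a linear bijection of C([0,1], ℝⁿ) onto itself. -/
open Matrix Set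

/-!
After extending `K` and `u` continuously beyond the triangle, resp. `[0,1]`, by clamping the
variables, everything reduces to one solvability result, `exists_volterra_solution`: the equation
`F(x,y) = G(x,y) + ∫_x^y B(z,y) F(x,z) dz` has a continuous solution on `[0,1]²`. With
`M = sup ‖B‖`, the `m`-th iterate of the right-hand side has Lipschitz constant at most `M ^ m / m!`
on `C([0,1]², E)`, so some iterate is a contraction and the Banach fixed point theorem applies.

It is used twice. With `F` valued in operators, it yields `L` with
`L(x,y) + K(x,y) + ∫_x^y L(x,z) K(z,y) dz = 0`, and exchanging the order of integration over a
triangle (`integral_triangle_swap`) turns this into the statement that `I + L` is a left inverse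
of `T` (`exists_resolvent`), which also gives injectivity of `T`. With `F` valued in `ℝⁿ` and base
point `x = 1`, it solves `u(y) = g(y) + ∫_1^y K(y,z) u(z) dz`, that is, `Tu = g`.
-/

open MeasureTheory intervalIntegral Function

lemma volterra_integral_continuous {X E : Type*} [TopologicalSpace X] [NormedAddCommGroup E]
    [NormedSpace ℝ E] {f : X → ℝ → E} (hf : Continuous (uncurry f)) {a b : X → ℝ}
    (ha : Continuous a) (hb : Continuous b) :
    Continuous fun p => ∫ z in a p..b p, f p z := by
  have hi (p : X) (c d : ℝ) : IntervalIntegrable (f p) volume c d :=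
    (hf.comp (Continuous.prodMk_right p)).intervalIntegrable c d
  have h : (fun p => ∫ z in a p..b p, f p z)
      = fun p => (∫ z in (0:ℝ)..b p, f p z) - ∫ z in (0:ℝ)..a p, f p z := by
    funext p
    exact (integral_interval_sub_left (hi p _ _) (hi p _ _)).symm
  rw [h]
  exact (continuous_parametric_intervalIntegral_of_continuous hf hb).sub
    (continuous_parametric_intervalIntegral_of_continuous hf ha)

/-- Fubini's theorem on the triangle `a ≤ y ≤ z ≤ b`. -/
lemma integral_triangle_swap {E : Type*} [NormedAddCommGroup E] [NormedSpace ℝ E]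
    {h : ℝ → ℝ → E} (hh : Continuous (uncurry h)) {a b : ℝ} (hab : a ≤ b) :
    ∫ y in a..b, ∫ z in y..b, h y z = ∫ z in a..b, ∫ y in a..z, h y z := by
  -- Both sides are integrals over the square `[a,b]²` of `h` cut off to `y ≤ z`.
  let S : Set (ℝ × ℝ) := {p | p.1 ≤ p.2}
  have hS : MeasurableSet S := measurableSet_le measurable_fst measurable_snd
  let f : ℝ → ℝ → E := fun y z => S.indicator (uncurry h) (y, z)
  have hf : IntegrableOn (uncurry f) (uIoc a b ×ˢ uIoc a b) := by
    have h1 : IntegrableOn (uncurry h) (uIoc a b ×ˢ uIoc a b) := by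
      refine (hh.continuousOn.integrableOn_compact
        (isCompact_Icc.prod isCompact_Icc : IsCompact (Icc a b ×ˢ Icc a b))).mono_set ?_
      rw [uIoc_of_le hab]
      exact prod_mono Ioc_subset_Icc_self Ioc_subset_Icc_self
    exact h1.indicator hS
  have key := intervalIntegral_intervalIntegral_swap hf
  have hl : ∫ y in a..b, ∫ z in y..b, h y z = ∫ y in a..b, ∫ z in a..b, f y z := by
    refine intervalIntegral.integral_congr_ae (.of_forall fun y hy => ?_)
    rw [uIoc_of_le hab] at hy
    have : f y = (Ici y).indicator (h y) := by
      funext z; simp [f, S, indicator, uncurry]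
    rw [this, integral_of_le hab, integral_of_le hy.2, setIntegral_indicator measurableSet_Ici,
      ← integral_Icc_eq_integral_Ioc]
    congr 2
    ext z; simp only [mem_Icc, mem_inter_iff, mem_Ioc, mem_Ici]
    exact ⟨fun h => ⟨⟨hy.1.trans_le h.1, h.2⟩, h.1⟩, fun h => ⟨h.2, h.1.2⟩⟩
  have hr : ∫ z in a..b, ∫ y in a..z, h y z = ∫ z in a..b, ∫ y in a..b, f y z := by
    refine intervalIntegral.integral_congr_ae (.of_forall fun z hz => ?_)
    rw [uIoc_of_le hab] at hz
    have : (fun y => f y z) = (Iic z).indicator (fun y => h y z) := by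
      funext y; simp [f, S, indicator, uncurry]
    rw [this, integral_of_le hab, integral_of_le hz.1.le, setIntegral_indicator measurableSet_Iic]
    congr 2
    ext y; simp only [mem_inter_iff, mem_Ioc, mem_Iic]
    exact ⟨fun h => ⟨⟨h.1, h.2.trans hz.2⟩, h.2⟩, fun h => ⟨h.1.1, h.2⟩⟩
  rw [hl, hr, key]

/-- Solvability of a Volterra equation with parameter `x`, which is also the base point of the
integral. Both orders of `x` and `y` are allowed, so the equation can be integrated backwards. -/
lemma exists_volterra_solution {E : Type*} [NormedAddCommGroup E] [NormedSpace ℝ E]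
    [CompleteSpace E] {B : ℝ → ℝ → E →L[ℝ] E} (hB : Continuous (uncurry B))
    {G : ℝ → ℝ → E} (hG : Continuous (uncurry G)) :
    ∃ F : ℝ → ℝ → E, Continuous (uncurry F) ∧ ∀ x ∈ Icc (0:ℝ) 1, ∀ y ∈ Icc (0:ℝ) 1,
      F x y = G x y + ∫ z in x..y, B z y (F x z) := by
  let I := Icc (0:ℝ) 1
  let π : ℝ → I := projIcc 0 1 zero_le_one
  have hπ : Continuous π := continuous_projIcc
  have hint (F : C(I × I, E)) :
      Continuous (uncurry fun (p : I × I) (z : ℝ) => B z p.2 (F (p.1, π z))) := by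
    have h1 : Continuous fun q : (I × I) × ℝ => B q.2 q.1.2 :=
      hB.comp (f := fun q : (I × I) × ℝ => (q.2, (q.1.2 : ℝ))) (by fun_prop)
    exact h1.clm_apply (F.continuous.comp (by fun_prop))
  -- The right-hand side of the equation as a self-map of `C([0,1]², E)`.
  let Φ : C(I × I, E) → C(I × I, E) := fun F =>
    ⟨fun p => G p.1 p.2 + ∫ z in (p.1:ℝ)..p.2, B z p.2 (F (p.1, π z)), by
      have h2 : Continuous fun p : I × I => G p.1 p.2 :=
        hG.comp (f := fun p : I × I => ((p.1:ℝ), (p.2:ℝ))) (by fun_prop)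
      exact h2.add (volterra_integral_continuous (hint F) (by fun_prop) (by fun_prop))⟩
  obtain ⟨M, hM⟩ : ∃ M : ℝ, ∀ p ∈ Icc (0:ℝ) 1 ×ˢ Icc (0:ℝ) 1, ‖uncurry B p‖ ≤ M :=
    (isCompact_Icc.prod isCompact_Icc).exists_bound_of_continuousOn hB.continuousOn
  have hM0 : 0 ≤ M := (norm_nonneg _).trans (hM (0, 0) (by simp))
  have hΦ (F F' : C(I × I, E)) (m : ℕ) : ∀ p : I × I,
      ‖(Φ^[m] F) p - (Φ^[m] F') p‖ ≤ M ^ m * |(p.2:ℝ) - p.1| ^ m / m.factorial * dist F F' := by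
    induction m with
    | zero => intro p; simpa [dist_eq_norm] using ContinuousMap.dist_apply_le_dist (f := F) (g := F') p
    | succ m ih =>
      intro p
      rw [iterate_succ_apply', iterate_succ_apply']
      set U := Φ^[m] F
      set V := Φ^[m] F'
      have hsub : (Φ U) p - (Φ V) p
          = ∫ z in (p.1:ℝ)..p.2, B z p.2 (U (p.1, π z) - V (p.1, π z)) := by
        have hi (W : C(I × I, E)) :
            IntervalIntegrable (fun z => B z p.2 (W (p.1, π z))) volume p.1 p.2 :=
          ((hint W).comp (Continuous.prodMk_right p)).intervalIntegrable _ _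
        simp only [map_sub]
        rw [integral_sub (hi U) (hi V)]
        simp [Φ]
      rw [hsub]
      have hbd : ∀ z ∈ uIoc (p.1:ℝ) p.2, ‖B z p.2 (U (p.1, π z) - V (p.1, π z))‖
          ≤ M ^ (m + 1) / m.factorial * dist F F' * |z - p.1| ^ m := by
        intro z hz
        have hzI : z ∈ Icc (0:ℝ) 1 := by
          have := uIoc_subset_uIcc hz
          exact (uIcc_subset_Icc p.1.2 p.2.2) this
        have h1 := ih (p.1, π z)
        have hz' : ((π z : I) : ℝ) = z := by simp [π, projIcc_of_mem zero_le_one hzI]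
        rw [hz'] at h1
        calc _ ≤ M * (M ^ m * |z - p.1| ^ m / m.factorial * dist F F') :=
              (B z p.2).le_of_opNorm_le_of_le (hM (z, p.2) ⟨hzI, p.2.2⟩) h1
          _ = _ := by ring
      calc _ ≤ |∫ z in (p.1:ℝ)..p.2, M ^ (m + 1) / m.factorial * dist F F' * |z - p.1| ^ m| :=
            norm_integral_le_abs_of_norm_le
              ((ae_restrict_iff' measurableSet_uIoc).2 (.of_forall hbd))
              (Continuous.intervalIntegrable (by fun_prop) _ _)
        _ = _ := by
          rw [intervalIntegral.integral_const_mul, abs_mul, abs_intervalIntegral_eq, integral_pow_abs_sub_uIoc,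
            abs_of_nonneg (by positivity), abs_of_nonneg (by positivity), Nat.factorial_succ]
          push_cast
          field_simp
  obtain ⟨m, hm⟩ := FloorSemiring.tendsto_pow_div_factorial_atTop M
    |>.eventually (gt_mem_nhds zero_lt_one) |>.exists
  have hcontr : ContractingWith ⟨M ^ m / m.factorial, by positivity⟩ Φ^[m] := by
    refine ⟨hm, LipschitzWith.of_dist_le_mul fun F F' => ?_⟩
    refine (ContinuousMap.dist_le (mul_nonneg (NNReal.coe_nonneg _) dist_nonneg)).2 fun p => ?_
    rw [dist_eq_norm]
    refine (hΦ F F' m p).trans ?_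
    change _ ≤ M ^ m / m.factorial * dist F F'
    have : |(p.2:ℝ) - p.1| ^ m ≤ 1 := by
      refine pow_le_one₀ (abs_nonneg _) (abs_le.2 ?_)
      have h1 := p.1.2; have h2 := p.2.2
      constructor <;> linarith [h1.1, h1.2, h2.1, h2.2]
    have h3 : M ^ m * |(p.2:ℝ) - p.1| ^ m ≤ M ^ m := mul_le_of_le_one_right (by positivity) this
    gcongr
  have hfix := hcontr.isFixedPt_fixedPoint_iterate
  set F := hcontr.fixedPoint Φ^[m]
  refine ⟨fun x y => F (π x, π y), F.continuous.comp (by fun_prop), fun x hx y hy => ?_⟩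
  have := congrArg (fun W : C(I × I, E) => W (⟨x, hx⟩, ⟨y, hy⟩)) hfix.eq
  simp only [π, projIcc_of_mem zero_le_one hx, projIcc_of_mem zero_le_one hy]
  exact this.symm

/-- The resolvent kernel for operator-valued kernels: the conclusion is `u = Tu + ∫ L · Tu` with
the two terms `u x` cancelled. -/
lemma exists_resolvent {E : Type*} [NormedAddCommGroup E] [NormedSpace ℝ E]
    [CompleteSpace E] {K : ℝ → ℝ → E →L[ℝ] E} (hK : Continuous (uncurry K)) :
    ∃ L : ℝ → ℝ → E →L[ℝ] E, Continuous (uncurry L) ∧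
      ∀ u : ℝ → E, Continuous u → ∀ x ∈ Icc (0:ℝ) 1,
        (∫ y in x..1, K x y (u y)) + ∫ y in x..1, L x y (u y + ∫ z in y..1, K y z (u z)) = 0 := by
  -- `L(x,y) = -K(x,y) - ∫_x^y L(x,z) K(z,y) dz`: here `B` is right multiplication by `-K`.
  obtain ⟨L, hL, hLeq⟩ := exists_volterra_solution
    (B := fun z y => (ContinuousLinearMap.mul ℝ (E →L[ℝ] E)).flip (-K z y))
    (G := fun x y => -K x y)
    ((ContinuousLinearMap.mul ℝ (E →L[ℝ] E)).flip.continuous.comp hK.neg) hK.neg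
  refine ⟨L, hL, fun u hu x hx => ?_⟩
  have hKx : Continuous fun y => K x y := hK.comp (Continuous.prodMk_right x)
  have hLx : Continuous fun y => L x y := hL.comp (Continuous.prodMk_right x)
  have hKu : Continuous (uncurry fun y z => K y z (u z)) :=
    hK.clm_apply (hu.comp continuous_snd)
  have hLK : Continuous (uncurry fun y z => L x y (K y z (u z))) :=
    (hLx.comp continuous_fst).clm_apply hKu
  have hin : Continuous fun y => ∫ z in y..1, K y z (u z) :=
    volterra_integral_continuous hKu continuous_id continuous_const
  have hsw : ∫ y in x..1, L x y (∫ z in y..1, K y z (u z))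
      = ∫ z in x..1, ∫ y in x..z, L x y (K y z (u z)) := by
    rw [← integral_triangle_swap hLK hx.2]
    congr 1
    funext y
    exact ((L x y).intervalIntegral_comp_comm
      ((hKu.comp (Continuous.prodMk_right y)).intervalIntegrable _ _)).symm
  have hin2 : Continuous fun z => ∫ y in x..z, L x y (K y z (u z)) :=
    volterra_integral_continuous (f := fun z y => L x y (K y z (u z)))
      (hLK.comp continuous_swap) continuous_const continuous_id
  simp only [map_add]
  have i1 := (hKx.clm_apply hu).intervalIntegrable (μ := volume) x 1
  have i2 := (hLx.clm_apply hu).intervalIntegrable (μ := volume) x 1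
  have i3 := (hLx.clm_apply hin).intervalIntegrable (μ := volume) x 1
  have i4 := hin2.intervalIntegrable (μ := volume) x 1
  rw [integral_add i2 i3, hsw, ← integral_add i2 i4, ← integral_add i1 (i2.add i4)]
  rw [integral_congr (g := fun _ => (0:E)), intervalIntegral.integral_zero]
  intro z hz
  rw [uIcc_of_le hx.2] at hz
  have hz' : z ∈ Icc (0:ℝ) 1 := ⟨hx.1.trans hz.1, hz.2⟩
  have hc : Continuous fun y => L x y * K y z :=
    hLx.mul (hK.comp (Continuous.prodMk_left z))
  have e := congrArg (fun A : E →L[ℝ] E => A (u z)) (hLeq x hx z hz')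
  simp only [ContinuousLinearMap.flip_apply, ContinuousLinearMap.mul_apply', mul_neg,
    intervalIntegral.integral_neg, _root_.add_apply, _root_.neg_apply] at e
  have e2 : (∫ y in x..z, L x y * K y z) (u z) = ∫ y in x..z, L x y (K y z (u z)) :=
    ContinuousLinearMap.intervalIntegral_apply (hc.intervalIntegrable _ _) (u z)
  rw [e2] at e
  change K x z (u z) + (L x z (u z) + ∫ y in x..z, L x y (K y z (u z))) = 0
  rw [e]; abel

/-- invertibility of the Volterra integral transformation of the
second kind `(Tu)(x) = u(x) + ∫_x^1 K(x,y) u(y) dy`: there is a continuous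
resolvent kernel `L` on the triangle `{x ≤ y}` with
`u(x) = (Tu)(x) + ∫_x^1 L(x,y) (Tu)(y) dy`, and `u ↦ Tu` is a (linear)
bijection of `C([0,1],ℝⁿ)` onto itself. -/
theorem stmt1 (n : ℕ) (hn : 1 ≤ n) (K : ℝ → ℝ → Matrix (Fin n) (Fin n) ℝ)
    (hK : ContinuousOn (fun p : ℝ × ℝ => K p.1 p.2)
      {p : ℝ × ℝ | p.1 ∈ Icc (0:ℝ) 1 ∧ p.2 ∈ Icc (0:ℝ) 1 ∧ p.1 ≤ p.2}) :
    ∃ L : ℝ → ℝ → Matrix (Fin n) (Fin n) ℝ,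
      ContinuousOn (fun p : ℝ × ℝ => L p.1 p.2)
        {p : ℝ × ℝ | p.1 ∈ Icc (0:ℝ) 1 ∧ p.2 ∈ Icc (0:ℝ) 1 ∧ p.1 ≤ p.2} ∧
      -- the resolvent identity: `u = Tu + ∫ L · Tu`
      (∀ u : ℝ → Fin n → ℝ, ContinuousOn u (Icc 0 1) →
        ∀ x ∈ Icc (0:ℝ) 1,
          u x = (u x + ∫ y in x..1, K x y *ᵥ u y)
            + ∫ y in x..1, L x y *ᵥ (u y + ∫ z in y..1, K y z *ᵥ u z)) ∧
      -- in particular, `u ↦ Tu` is a bijection of `C([0,1],ℝⁿ)` onto itself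
      (∀ g : ℝ → Fin n → ℝ, ContinuousOn g (Icc 0 1) →
        ∃ u : ℝ → Fin n → ℝ, ContinuousOn u (Icc 0 1) ∧
          (∀ x ∈ Icc (0:ℝ) 1, u x + (∫ y in x..1, K x y *ᵥ u y) = g x) ∧
          ∀ u' : ℝ → Fin n → ℝ, ContinuousOn u' (Icc 0 1) →
            (∀ x ∈ Icc (0:ℝ) 1, u' x + (∫ y in x..1, K x y *ᵥ u' y) = g x) →
            ∀ x ∈ Icc (0:ℝ) 1, u' x = u x) := by
  -- `(x, y) ↦ (c x, max (c x) (c y))` retracts the plane onto the triangle.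
  let c : ℝ → ℝ := fun x => projIcc (0:ℝ) 1 zero_le_one x
  have hc : Continuous c := continuous_subtype_val.comp continuous_projIcc
  have hcI (x : ℝ) : c x ∈ Icc (0:ℝ) 1 := (projIcc (0:ℝ) 1 zero_le_one x).2
  have hcx {x : ℝ} (hx : x ∈ Icc (0:ℝ) 1) : c x = x := by
    simp [c, projIcc_of_mem zero_le_one hx]
  let e : Matrix (Fin n) (Fin n) ℝ ≃ₗ[ℝ] ((Fin n → ℝ) →L[ℝ] (Fin n → ℝ)) :=
    Matrix.toLin'.trans LinearMap.toContinuousLinearMap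
  have he : Continuous e := LinearMap.continuous_of_finiteDimensional e.toLinearMap
  have hes : Continuous e.symm := LinearMap.continuous_of_finiteDimensional e.symm.toLinearMap
  have heA (A : Matrix (Fin n) (Fin n) ℝ) (v : Fin n → ℝ) : e A v = A *ᵥ v := rfl
  let k : ℝ → ℝ → (Fin n → ℝ) →L[ℝ] (Fin n → ℝ) := fun x y => e (K (c x) (max (c x) (c y)))
  have hk : Continuous (uncurry k) := by
    refine he.comp (hK.comp_continuous
      (f := fun p : ℝ × ℝ => (c p.1, max (c p.1) (c p.2))) (by fun_prop) fun p => ?_)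
    exact ⟨hcI _, ⟨(hcI p.1).1.trans (le_max_left _ _), max_le (hcI p.1).2 (hcI p.2).2⟩,
      le_max_left _ _⟩
  have hkK {x y : ℝ} (hx : x ∈ Icc (0:ℝ) 1) (hy : y ∈ Icc x 1) (v : Fin n → ℝ) :
      k x y v = K x y *ᵥ v := by
    have hy' : y ∈ Icc (0:ℝ) 1 := ⟨hx.1.trans hy.1, hy.2⟩
    simp only [k, heA, hcx hx, hcx hy', max_eq_right hy.1]
  have hint {u : ℝ → Fin n → ℝ} {x : ℝ} (hx : x ∈ Icc (0:ℝ) 1) :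
      ∫ y in x..1, k x y (u (c y)) = ∫ y in x..1, K x y *ᵥ u y := by
    refine integral_congr fun y hy => ?_
    rw [uIcc_of_le hx.2] at hy
    have hy' : y ∈ Icc (0:ℝ) 1 := ⟨hx.1.trans hy.1, hy.2⟩
    simp only [hkK hx hy, hcx hy']
  have hext {u : ℝ → Fin n → ℝ} (hu : ContinuousOn u (Icc 0 1)) : Continuous fun x => u (c x) :=
    hu.comp_continuous hc hcI
  obtain ⟨L, hL, hLeq⟩ := exists_resolvent hk
  have hres : ∀ u : ℝ → Fin n → ℝ, ContinuousOn u (Icc 0 1) →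
        ∀ x ∈ Icc (0:ℝ) 1,
          u x = (u x + ∫ y in x..1, K x y *ᵥ u y)
            + ∫ y in x..1, e.symm (L x y) *ᵥ (u y + ∫ z in y..1, K y z *ᵥ u z) := by
    intro u hu x hx
    have h := hLeq _ (hext hu) x hx
    rw [hint hx] at h
    have h2 : ∫ y in x..1, L x y (u (c y) + ∫ z in y..1, k y z (u (c z)))
        = ∫ y in x..1, e.symm (L x y) *ᵥ (u y + ∫ z in y..1, K y z *ᵥ u z) := by
      refine integral_congr fun y hy => ?_
      rw [uIcc_of_le hx.2] at hy
      have hy' : y ∈ Icc (0:ℝ) 1 := ⟨hx.1.trans hy.1, hy.2⟩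
      simp only [← heA, e.apply_symm_apply]
      simp only [heA, hint hy', hcx hy']
    rw [h2] at h
    rw [add_assoc, h, add_zero]
  refine ⟨fun x y => e.symm (L x y), (hes.comp hL).continuousOn, hres, fun g hg => ?_⟩
  -- Only the slice `x = 1` of the solution is used; `∫_1^y` accounts for the sign of `∫_y^1`.
  obtain ⟨F, hF, hFeq⟩ := exists_volterra_solution (B := fun z y => k y z)
    (G := fun _ y => g (c y)) (hk.comp continuous_swap) ((hext hg).comp continuous_snd)
  have hu : Continuous fun x => F 1 x := hF.comp (Continuous.prodMk_right 1)
  have hTu : ∀ x ∈ Icc (0:ℝ) 1, F 1 x + (∫ y in x..1, K x y *ᵥ F 1 y) = g x := by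
    intro x hx
    have h := hFeq 1 (by simp) x hx
    have h3 : ∫ y in x..1, k x y (F 1 y) = ∫ y in x..1, K x y *ᵥ F 1 y := by
      refine integral_congr fun y hy => ?_
      rw [uIcc_of_le hx.2] at hy
      exact hkK hx hy _
    rw [h, integral_symm, h3, hcx hx]
    abel
  refine ⟨fun x => F 1 x, hu.continuousOn, hTu, fun u' hu' hTu' x hx => ?_⟩
  refine (hres u' hu' x hx).trans
    (Eq.trans ?_ (hres (fun x => F 1 x) hu.continuousOn x hx).symm)
  rw [hTu' x hx, hTu x hx]
  congr 1
  refine integral_congr fun y hy => ?_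
  rw [uIcc_of_le hx.2] at hy
  have hy' : y ∈ Icc (0:ℝ) 1 := ⟨hx.1.trans hy.1, hy.2⟩
  simp only [hTu' y hy', hTu y hy']
end

section
/- Let n ≥ 1, let 0 < λ_1 < λ_2 < … < λ_n be real transport speeds, and let Ǧ : [0,1] × [0, 1/λ_1] → M_n(ℝ) be continuous with Ǧ(x,ν)_{jℓ} = 0 whenever ℓ ≤ j. Let t₀ ∈ ℝ, let ζ : ℝ → ℝⁿ be continuous, and let α : ℝ × [0,1] → ℝⁿ be continuous such that: (i) for all t ∈ ℝ and 1 ≤ j ≤ n, α_j(t,0) = α_j(t + 1/λ_j, 1) + Σ_{ℓ=j+1}^n ∫_0^{1/λ_j} Ǧ(0,ν)_{jℓ} α_ℓ(t + ν, 1) dν; and (ii) for all t > t₀ and 1 ≤ j ≤ n, α_j(t,0) = ζ_j(t + 1/λ_j) + Σ_{ℓ=j+1}^n ∫_0^{1/λ_j} Ǧ(0,ν)_{jℓ} ζ_ℓ(t + ν) dν. Then for all t > t₀ + Σ_{k=1}^n 1/λ_k and all 1 ≤ j ≤ n: α_j(t,1) = ζ_j(t). -/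
open Matrix Set

/-! Comparing the representation and the tracking law at time `t - 1 / lam j` expresses
`α t 1 j - ζ t j` through integrals of the tracking errors of the components `ℓ > j` over
`[t - 1 / lam j, t]`. By downward induction on `j`, component `j` therefore tracks exactly
after time `t₀ + ∑ k ≥ j, 1 / lam k`, which is at most `t₀ + ∑ k, 1 / lam k`. -/

/-- output trajectory tracking (Property 1 of the paper). If the
left boundary trace of the strictly upper-triangularly closed transport
subsystem is prescribed by the flatness-based feedforward tracking law for
`t > t₀`, then after the finite time `t₀ + ∑_k 1/λ_k` the right output exactly
tracks the reference: `α(t,1) = ζ(t)`. -/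
theorem stmt6 (n : ℕ) (hn : 1 ≤ n) (lam : Fin n → ℝ)
    (hpos : ∀ j, 0 < lam j) (hmono : StrictMono lam)
    (Gc : ℝ → ℝ → Matrix (Fin n) (Fin n) ℝ)
    (hGcCont : ContinuousOn (fun p : ℝ × ℝ => Gc p.1 p.2)
      (Icc (0:ℝ) 1 ×ˢ Icc (0:ℝ) (1 / lam ⟨0, hn⟩)))
    (hGcTri : ∀ x ν : ℝ, ∀ j ℓ : Fin n, ℓ ≤ j → Gc x ν j ℓ = 0)
    (t₀ : ℝ) (ζ : ℝ → Fin n → ℝ) (hζ : Continuous ζ)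
    (α : ℝ → ℝ → Fin n → ℝ)
    (hα : Continuous (fun p : ℝ × ℝ => α p.1 p.2))
    -- (i) closed boundary-to-boundary representation of the subsystem
    (hrep : ∀ t : ℝ, ∀ j : Fin n,
      α t 0 j = α (t + 1 / lam j) 1 j
        + ∑ ℓ ∈ Finset.univ.filter (fun ℓ => j < ℓ),
            ∫ ν in (0:ℝ)..(1 / lam j), Gc 0 ν j ℓ * α (t + ν) 1 ℓ)
    -- (ii) the prescribed flatness-based feedforward tracking law
    (htrack : ∀ t : ℝ, t₀ < t → ∀ j : Fin n,
      α t 0 j = ζ (t + 1 / lam j) j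
        + ∑ ℓ ∈ Finset.univ.filter (fun ℓ => j < ℓ),
            ∫ ν in (0:ℝ)..(1 / lam j), Gc 0 ν j ℓ * ζ (t + ν) ℓ) :
    ∀ t : ℝ, t₀ + ∑ k : Fin n, 1 / lam k < t → ∀ j : Fin n,
      α t 1 j = ζ t j := by
  have hinv : ∀ k, 0 ≤ 1 / lam k := fun k => (one_div_pos.mpr (hpos k)).le
  have key : ∀ j : Fin n, ∀ t : ℝ,
      t₀ + ∑ k ∈ Finset.univ.filter (fun k => j ≤ k), 1 / lam k < t →
        α t 1 j = ζ t j := by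
    intro j
    induction j using WellFoundedGT.induction with
    | ind j ih =>
      intro t ht
      have hsplit : ∑ k ∈ Finset.univ.filter (fun k => j ≤ k), 1 / lam k
          = 1 / lam j + ∑ k ∈ Finset.univ.filter (fun k => j < k), 1 / lam k := by
        have hset : Finset.univ.filter (fun k => j ≤ k)
            = insert j (Finset.univ.filter (fun k => j < k)) := by
          ext k
          simp [le_iff_eq_or_lt, eq_comm]
        rw [hset, Finset.sum_insert (by simp)]
      have hsum : 0 ≤ ∑ k ∈ Finset.univ.filter (fun k => j < k), 1 / lam k :=
        Finset.sum_nonneg fun k _ => hinv k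
      have heq := (hrep (t - 1 / lam j) j).symm.trans
        (htrack (t - 1 / lam j) (by linarith) j)
      -- At every time sampled by the integrals the components `ℓ > j` already track.
      have hint : ∑ ℓ ∈ Finset.univ.filter (fun ℓ => j < ℓ),
            ∫ ν in (0:ℝ)..(1 / lam j), Gc 0 ν j ℓ * α (t - 1 / lam j + ν) 1 ℓ
          = ∑ ℓ ∈ Finset.univ.filter (fun ℓ => j < ℓ),
            ∫ ν in (0:ℝ)..(1 / lam j), Gc 0 ν j ℓ * ζ (t - 1 / lam j + ν) ℓ := by
        refine Finset.sum_congr rfl fun ℓ hℓ => ?_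
        have hjℓ : j < ℓ := (Finset.mem_filter.mp hℓ).2
        refine intervalIntegral.integral_congr fun ν hν => ?_
        rw [uIcc_of_le (hinv j)] at hν
        have hle : ∑ k ∈ Finset.univ.filter (fun k => ℓ ≤ k), 1 / lam k
            ≤ ∑ k ∈ Finset.univ.filter (fun k => j < k), 1 / lam k := by
          refine Finset.sum_le_sum_of_subset_of_nonneg ?_ fun k _ _ => hinv k
          intro k hk
          simp only [Finset.mem_filter, Finset.mem_univ, true_and] at hk ⊢
          exact hjℓ.trans_le hk
        have hν0 := hν.1
        simp only [ih ℓ hjℓ (t - 1 / lam j + ν) (by linarith)]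
      rw [hint, sub_add_cancel] at heq
      exact add_right_cancel heq
  intro t ht j
  refine key j t (lt_of_le_of_lt ?_ ht)
  gcongr
  · exact fun k _ _ => hinv k
  · exact Finset.filter_subset _ _
end

section
/- Let n, m, p ≥ 1, let 0 < μ_1 < μ_2 < … < μ_m and λ > 0 be real numbers, let R ∈ M_{m×n}(ℝ) and R' ∈ M_{m×p}(ℝ), and let F : [0, 1/λ] → M_{n×p}(ℝ), Ḡ : [0,1] → M_{m×n}(ℝ), f̄ : [0,1] → M_{m×p}(ℝ) be continuous. For continuous ζ : ℝ → ℝⁿ and v : ℝ → ℝᵖ, define β : ℝ × [0,1] → ℝᵐ componentwise by β_j(t,x) = Σ_{k=1}^n R_{jk} ζ_k(t − (1−x)/μ_j) + Σ_{k=1}^p R'_{jk} v_k(t − (1−x)/μ_j) − Σ_{k=1}^n Σ_{ℓ=1}^p ∫_0^{1/λ} R_{jk} F(y)_{kℓ} v_ℓ(t − y − (1−x)/μ_j) dy + Σ_{k=1}^n ∫_0^{(1−x)/μ_j} Ḡ(x + μ_j ν)_{jk} ζ_k(t − ν) dν + Σ_{k=1}^p ∫_0^{(1−x)/μ_j} f̄(x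 + μ_j ν)_{jk} v_k(t − ν) dν. Then there exists a constant K > 0, depending only on μ_1, …, μ_m, λ, R, R', F, Ḡ, f̄, such that for every continuous ζ, v and every t ∈ ℝ: ∫_0^1 ‖β(t,x)‖² dx ≤ K ( ∫_{t − 1/μ_1}^t ‖ζ(s)‖² ds + ∫_{t − 1/μ_1 − 1/λ}^t ‖v(s)‖² ds ). -/
/-!
Each component `β_j(t, x)` is a sum of five terms, so its square is at most five times the sum of
the squares. The two pointwise terms are controlled by `‖ζ(t - τ)‖²` and `‖v(t - τ)‖²` with
`τ = (1 - x) / μ_j`, by the finite Cauchy-Schwarz inequality. The three integral terms have kernels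
bounded by compactness, so by the integral Cauchy-Schwarz inequality (`sq_integral_mul_le`) they are
controlled by the `L²` norms of `ζ` and `v` over the window (`sq_memory_term_le`). This gives a
bound of `β_j(t, x)²` by a continuous function of `x`, and integrating it over `[0, 1]` with the
change of variables `s = t - (1 - x) / μ_j` (`integral_delay_le`) costs only a factor `μ_j`, the
window of length `1 / μ_j` being contained in the one of length `1 / μ_1`.
-/

open Matrix Set
open MeasureTheory

lemma exists_entry_bound {a b : ℕ} (M : ℝ → Matrix (Fin a) (Fin b) ℝ) (s : Set ℝ)
    (hs : IsCompact s) (hM : ContinuousOn M s) :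
    ∃ C : ℝ, ∀ y ∈ s, ∀ i j, |M y i j| ≤ C := by
  have h : ∀ i j, ∃ C : ℝ, ∀ y ∈ s, |M y i j| ≤ C := by
    intro i j
    have hc : ContinuousOn (fun y => M y i j) s := by
      have h1 : Continuous (fun A : Matrix (Fin a) (Fin b) ℝ => A i j) := by fun_prop
      exact h1.comp_continuousOn hM
    obtain ⟨C, hC⟩ := hs.exists_bound_of_continuousOn hc
    exact ⟨C, fun y hy => by simpa using hC y hy⟩
  choose C hC using h
  refine ⟨∑ i, ∑ j, |C i j|, fun y hy i j => ?_⟩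
  calc |M y i j| ≤ |C i j| := (hC i j y hy).trans (le_abs_self _)
    _ ≤ ∑ j, |C i j| :=
      Finset.single_le_sum (f := fun j => |C i j|) (fun _ _ => abs_nonneg _) (Finset.mem_univ j)
    _ ≤ _ := Finset.single_le_sum (f := fun i => ∑ j, |C i j|)
      (fun _ _ => Finset.sum_nonneg fun _ _ => abs_nonneg _) (Finset.mem_univ i)

lemma sq_integral_abs_le (g : ℝ → ℝ) (hg : Continuous g) (ℓ : ℝ) (hℓ : 0 ≤ ℓ) :
    (∫ y in (0:ℝ)..ℓ, |g y|) ^ 2 ≤ ℓ * ∫ y in (0:ℝ)..ℓ, g y ^ 2 := by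
  rcases hℓ.eq_or_lt with rfl | hpos
  · simp
  set I := ∫ y in (0:ℝ)..ℓ, |g y| with hI
  set S := ∫ y in (0:ℝ)..ℓ, g y ^ 2 with hS
  -- `ℓ|g| - I` is `ℓ` times the deviation of `|g|` from its mean; its square has integral `≥ 0`.
  have h0 : 0 ≤ ∫ y in (0:ℝ)..ℓ, (ℓ * |g y| - I) ^ 2 :=
    intervalIntegral.integral_nonneg hℓ fun _ _ => sq_nonneg _
  have h1 : ∫ y in (0:ℝ)..ℓ, (ℓ * |g y| - I) ^ 2 = ℓ * (ℓ * S - I ^ 2) := by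
    have e : (fun y => (ℓ * |g y| - I) ^ 2)
        = fun y => ℓ ^ 2 * g y ^ 2 - 2 * ℓ * I * |g y| + I ^ 2 := by
      funext y
      rw [← sq_abs (g y)]
      ring
    rw [e, intervalIntegral.integral_add, intervalIntegral.integral_sub,
      intervalIntegral.integral_const_mul, intervalIntegral.integral_const_mul,
      intervalIntegral.integral_const, ← hI, ← hS]
    · simp only [smul_eq_mul]
      ring
    all_goals exact Continuous.intervalIntegrable (by fun_prop) _ _
  rw [h1] at h0
  linarith [nonneg_of_mul_nonneg_right h0 hpos]

/-- Cauchy-Schwarz with a bounded kernel. The kernel `h` need not be measurable: if `h * g` is not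
integrable, the left-hand side is zero. -/
lemma sq_integral_mul_le (h g : ℝ → ℝ) (hg : Continuous g) (C ℓ : ℝ) (hℓ : 0 ≤ ℓ)
    (hh : ∀ y ∈ Icc (0:ℝ) ℓ, |h y| ≤ C) :
    (∫ y in (0:ℝ)..ℓ, h y * g y) ^ 2 ≤ C ^ 2 * ℓ * ∫ y in (0:ℝ)..ℓ, g y ^ 2 := by
  have h1 : ‖∫ y in (0:ℝ)..ℓ, h y * g y‖ ≤ ∫ y in (0:ℝ)..ℓ, C * |g y| := by
    apply intervalIntegral.norm_integral_le_of_norm_le hℓ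
    · refine Filter.Eventually.of_forall fun y hy => ?_
      rw [Real.norm_eq_abs, abs_mul]
      exact mul_le_mul_of_nonneg_right (hh y ⟨hy.1.le, hy.2⟩) (abs_nonneg _)
    · exact Continuous.intervalIntegrable (by fun_prop) _ _
  rw [intervalIntegral.integral_const_mul, Real.norm_eq_abs] at h1
  calc (∫ y in (0:ℝ)..ℓ, h y * g y) ^ 2 = |∫ y in (0:ℝ)..ℓ, h y * g y| ^ 2 := (sq_abs _).symm
    _ ≤ (C * ∫ y in (0:ℝ)..ℓ, |g y|) ^ 2 := pow_le_pow_left₀ (abs_nonneg _) h1 2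
    _ = C ^ 2 * (∫ y in (0:ℝ)..ℓ, |g y|) ^ 2 := by ring
    _ ≤ C ^ 2 * (ℓ * ∫ y in (0:ℝ)..ℓ, g y ^ 2) :=
      mul_le_mul_of_nonneg_left (sq_integral_abs_le g hg ℓ hℓ) (sq_nonneg _)
    _ = _ := by ring

lemma integral_window_mono (q : ℝ → ℝ) (hq : Continuous q) (hq0 : ∀ s, 0 ≤ q s)
    {a b c d : ℝ} (hca : c ≤ a) (hab : a ≤ b) (hbd : b ≤ d) :
    ∫ s in a..b, q s ≤ ∫ s in c..d, q s :=
  intervalIntegral.integral_mono_interval hca hab hbd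
    (Filter.Eventually.of_forall hq0) (hq.intervalIntegrable _ _)

/-- A distributed-delay term of the kernel `h` acting on the history of the signal `u` before time
`s`, over a delay range `[0, ℓ]`, is bounded by the energy of `u` on any window containing
`[s - ℓ, s]`. -/
lemma sq_memory_term_le {N : ℕ} (u : ℝ → Fin N → ℝ) (hu : Continuous u) (h : ℝ → ℝ)
    (C ℓ ℓ' s a t : ℝ) (hℓ : 0 ≤ ℓ) (hℓ' : ℓ ≤ ℓ') (hh : ∀ y ∈ Icc (0:ℝ) ℓ, |h y| ≤ C)
    (ha : a ≤ s - ℓ) (hs : s ≤ t) (k : Fin N) :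
    (∫ y in (0:ℝ)..ℓ, h y * u (s - y) k) ^ 2
      ≤ C ^ 2 * ℓ' * ∫ r in a..t, ∑ k, u r k ^ 2 := by
  have h1 := sq_integral_mul_le h (fun y => u (s - y) k) (by fun_prop) C ℓ hℓ hh
  have h2 : ∫ y in (0:ℝ)..ℓ, u (s - y) k ^ 2 = ∫ r in (s - ℓ)..s, u r k ^ 2 := by
    rw [intervalIntegral.integral_comp_sub_left (fun r => u r k ^ 2) s, sub_zero]
  have h3 : ∫ r in (s - ℓ)..s, u r k ^ 2 ≤ ∫ r in (s - ℓ)..s, ∑ k, u r k ^ 2 := by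
    apply intervalIntegral.integral_mono_on (by linarith)
    · exact Continuous.intervalIntegrable (by fun_prop) _ _
    · exact Continuous.intervalIntegrable (by fun_prop) _ _
    · intro r _
      exact Finset.single_le_sum (f := fun k => u r k ^ 2) (fun _ _ => sq_nonneg _)
        (Finset.mem_univ k)
  have h4 : ∫ r in (s - ℓ)..s, ∑ k, u r k ^ 2 ≤ ∫ r in a..t, ∑ k, u r k ^ 2 :=
    integral_window_mono _ (by fun_prop) (fun _ => Finset.sum_nonneg fun _ _ => sq_nonneg _)
      ha (by linarith) hs
  have h5 : 0 ≤ ∫ r in a..t, ∑ k, u r k ^ 2 :=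
    intervalIntegral.integral_nonneg (by linarith)
      fun _ _ => Finset.sum_nonneg fun _ _ => sq_nonneg _
  refine h1.trans ?_
  rw [h2]
  exact mul_le_mul (mul_le_mul_of_nonneg_left hℓ' (sq_nonneg _)) (h3.trans h4)
    (intervalIntegral.integral_nonneg (by linarith) fun _ _ => sq_nonneg _)
    (mul_nonneg (sq_nonneg _) (hℓ.trans hℓ'))

lemma sq_sum_le_of_sq_le {N : ℕ} (f c : Fin N → ℝ) (V : ℝ) (h : ∀ k, f k ^ 2 ≤ c k * V) :
    (∑ k, f k) ^ 2 ≤ (N * ∑ k, c k) * V := by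
  have h1 := sq_sum_le_card_mul_sum_sq (s := Finset.univ) (f := f)
  rw [Finset.card_univ, Fintype.card_fin] at h1
  refine h1.trans ?_
  rw [mul_assoc, Finset.sum_mul]
  exact mul_le_mul_of_nonneg_left (Finset.sum_le_sum fun k _ => h k) (Nat.cast_nonneg _)

/-- Integrating a pure delay in `x` is a time integral over a window of length `1 / c`. -/
lemma integral_delay_le (q : ℝ → ℝ) (hq : Continuous q) (hq0 : ∀ s, 0 ≤ q s) (c a t : ℝ)
    (hc : 0 < c) (ha : a ≤ t - 1 / c) :
    ∫ x in (0:ℝ)..1, q (t - (1 - x) / c) ≤ c * ∫ s in a..t, q s := by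
  have e : ∫ x in (0:ℝ)..1, q (t - (1 - x) / c) = c * ∫ s in (t - 1 / c)..t, q s := by
    have h := intervalIntegral.integral_comp_div_add (a := 0) (b := 1) q hc.ne' (t - 1 / c)
    rw [smul_eq_mul, zero_div, zero_add, add_sub_cancel] at h
    rw [← h]
    refine intervalIntegral.integral_congr fun x _ => ?_
    show q _ = q _
    congr 1
    ring
  rw [e]
  have := one_div_pos.mpr hc
  exact mul_le_mul_of_nonneg_left (integral_window_mono q hq hq0 ha (by linarith) le_rfl) hc.le

lemma sq_five_le (a b c d e : ℝ) :
    (a + b - c + d + e) ^ 2 ≤ 5 * (a ^ 2 + b ^ 2 + c ^ 2 + d ^ 2 + e ^ 2) := by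
  nlinarith [sq_nonneg (a - b), sq_nonneg (a + c), sq_nonneg (a - d), sq_nonneg (a - e),
    sq_nonneg (b + c), sq_nonneg (b - d), sq_nonneg (b - e), sq_nonneg (c + d),
    sq_nonneg (c + e), sq_nonneg (d - e)]

/-- the input-to-state stability estimate of Property 2 of the
paper. For the explicit delay representation `β` (equation (15)) of the
leftward-traveling target state in terms of the tracked output `ζ` and the
downstream boundary trace `v`, the spatial `L²`-norm of `β(t,·)` is bounded by
the recent `L²`-norms of `ζ` and `v`, with a constant independent of `ζ`, `v`
and `t`. -/
theorem stmt7 (n m p : ℕ) (hn : 1 ≤ n) (hm : 1 ≤ m) (hp : 1 ≤ p)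
    (μ : Fin m → ℝ) (hμpos : ∀ j, 0 < μ j) (hμmono : StrictMono μ)
    (lam : ℝ) (hlam : 0 < lam)
    (R : Matrix (Fin m) (Fin n) ℝ) (R' : Matrix (Fin m) (Fin p) ℝ)
    (F : ℝ → Matrix (Fin n) (Fin p) ℝ) (hF : ContinuousOn F (Icc (0:ℝ) (1 / lam)))
    (Gb : ℝ → Matrix (Fin m) (Fin n) ℝ) (hGb : ContinuousOn Gb (Icc (0:ℝ) 1))
    (fb : ℝ → Matrix (Fin m) (Fin p) ℝ) (hfb : ContinuousOn fb (Icc (0:ℝ) 1)) :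
    ∃ K : ℝ, 0 < K ∧
      ∀ ζ : ℝ → Fin n → ℝ, ∀ v : ℝ → Fin p → ℝ,
        Continuous ζ → Continuous v →
        ∀ β : ℝ → ℝ → Fin m → ℝ,
        (∀ (t x : ℝ) (j : Fin m), β t x j =
            (∑ k, R j k * ζ (t - (1 - x) / μ j) k)
            + (∑ k, R' j k * v (t - (1 - x) / μ j) k)
            - (∑ k, ∑ ℓ, ∫ y in (0:ℝ)..(1 / lam),
                R j k * F y k ℓ * v (t - y - (1 - x) / μ j) ℓ)
            + (∑ k, ∫ ν in (0:ℝ)..((1 - x) / μ j),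
                Gb (x + μ j * ν) j k * ζ (t - ν) k)
            + (∑ k, ∫ ν in (0:ℝ)..((1 - x) / μ j),
                fb (x + μ j * ν) j k * v (t - ν) k)) →
        ∀ t : ℝ,
          (∫ x in (0:ℝ)..1, ∑ j, (β t x j) ^ 2)
            ≤ K * ((∫ s in (t - 1 / μ ⟨0, hm⟩)..t, ∑ k, (ζ s k) ^ 2)
              + ∫ s in (t - 1 / μ ⟨0, hm⟩ - 1 / lam)..t, ∑ k, (v s k) ^ 2) := by
  obtain ⟨CF, hCF⟩ := exists_entry_bound F _ isCompact_Icc hF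
  obtain ⟨CG, hCG⟩ := exists_entry_bound Gb _ isCompact_Icc hGb
  obtain ⟨Cf, hCf⟩ := exists_entry_bound fb _ isCompact_Icc hfb
  set T : ℝ := 1 / μ ⟨0, hm⟩ with hT
  set L : ℝ := 1 / lam with hL
  have hL0 : 0 < L := one_div_pos.mpr hlam
  have hT0 : 0 < T := one_div_pos.mpr (hμpos _)
  have hTj : ∀ j, 1 / μ j ≤ T := fun j =>
    one_div_le_one_div_of_le (hμpos _) (hμmono.monotone (Fin.mk_le_of_le_val (Nat.zero_le _)))
  -- The pointwise constant for component `j`: one summand for each of the five terms of `β_j`.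
  let Kj : Fin m → ℝ := fun j => 5 * ((∑ k, R j k ^ 2) + (∑ k, R' j k ^ 2)
    + n * (∑ k, (p * ∑ _ℓ : Fin p, (|R j k| * CF) ^ 2 * L))
    + n * (∑ _k : Fin n, CG ^ 2 * T) + p * (∑ _k : Fin p, Cf ^ 2 * T))
  have hKj : ∀ j, 0 ≤ Kj j := fun j => by positivity
  have hK0 : 0 ≤ ∑ j, Kj j * (μ j + 1) :=
    Finset.sum_nonneg fun j _ => mul_nonneg (hKj j) (by linarith [hμpos j])
  refine ⟨(∑ j, Kj j * (μ j + 1)) + 1, by linarith, ?_⟩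
  intro ζ v hζ hv β hβ t
  set Z := ∫ s in (t - T)..t, ∑ k, (ζ s k) ^ 2 with hZ
  set V := ∫ s in (t - T - L)..t, ∑ k, (v s k) ^ 2 with hV
  have hZ0 : 0 ≤ Z := intervalIntegral.integral_nonneg (by linarith)
    fun _ _ => Finset.sum_nonneg fun _ _ => sq_nonneg _
  have hV0 : 0 ≤ V := intervalIntegral.integral_nonneg (by linarith)
    fun _ _ => Finset.sum_nonneg fun _ _ => sq_nonneg _
  have hpt : ∀ j, ∀ x ∈ Icc (0:ℝ) 1, (β t x j) ^ 2 ≤ Kj j *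
      ((∑ k, ζ (t - (1 - x) / μ j) k ^ 2) + (∑ k, v (t - (1 - x) / μ j) k ^ 2) + (Z + V)) := by
    intro j x hx
    have hμj := hμpos j
    have hτ0 : 0 ≤ (1 - x) / μ j := div_nonneg (by linarith [hx.2]) hμj.le
    have hτT : (1 - x) / μ j ≤ T :=
      (div_le_div_of_nonneg_right (by linarith [hx.1]) hμj.le).trans (hTj j)
    have hmem : ∀ y ∈ Icc (0:ℝ) ((1 - x) / μ j), x + μ j * y ∈ Icc (0:ℝ) 1 := by
      intro y hy
      have h1 : μ j * y ≤ 1 - x := by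
        have := (le_div_iff₀ hμj).mp hy.2
        linarith
      have h2 := mul_nonneg hμj.le hy.1
      exact ⟨by linarith [hx.1], by linarith⟩
    rw [hβ t x j]
    set τ := (1 - x) / μ j with hτ
    have ha := Finset.sum_mul_sq_le_sq_mul_sq Finset.univ (fun k => R j k) (fun k => ζ (t - τ) k)
    have hb := Finset.sum_mul_sq_le_sq_mul_sq Finset.univ (fun k => R' j k) (fun k => v (t - τ) k)
    have hc : (∑ k, ∑ ℓ, ∫ y in (0:ℝ)..L, R j k * F y k ℓ * v (t - y - τ) ℓ) ^ 2
        ≤ (n * (∑ k, (p * ∑ _ℓ : Fin p, (|R j k| * CF) ^ 2 * L))) * V := by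
      refine sq_sum_le_of_sq_le _ _ V fun k => sq_sum_le_of_sq_le _ _ V fun ℓ => ?_
      simp_rw [sub_right_comm t _ τ]
      refine sq_memory_term_le v hv (fun y => R j k * F y k ℓ) _ L L (t - τ) _ _ hL0.le le_rfl
        (fun y hy => ?_) (by linarith) (by linarith) ℓ
      rw [abs_mul]
      exact mul_le_mul_of_nonneg_left (hCF y hy k ℓ) (abs_nonneg _)
    have hd : (∑ k, ∫ ν in (0:ℝ)..τ, Gb (x + μ j * ν) j k * ζ (t - ν) k) ^ 2
        ≤ (n * (∑ _k : Fin n, CG ^ 2 * T)) * Z :=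
      sq_sum_le_of_sq_le _ _ Z fun k => sq_memory_term_le ζ hζ (fun ν => Gb (x + μ j * ν) j k)
        CG τ T t _ _ hτ0 hτT (fun y hy => hCG _ (hmem y hy) j k) (by linarith) le_rfl k
    have he : (∑ k, ∫ ν in (0:ℝ)..τ, fb (x + μ j * ν) j k * v (t - ν) k) ^ 2
        ≤ (p * (∑ _k : Fin p, Cf ^ 2 * T)) * V :=
      sq_sum_le_of_sq_le _ _ V fun k => sq_memory_term_le v hv (fun ν => fb (x + μ j * ν) j k)
        Cf τ T t _ _ hτ0 hτT (fun y hy => hCf _ (hmem y hy) j k) (by linarith) le_rfl k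
    refine (sq_five_le _ _ _ _ _).trans ?_
    have hA : 0 ≤ ∑ k, R j k ^ 2 := by positivity
    have hB : 0 ≤ ∑ k, R' j k ^ 2 := by positivity
    have hC : 0 ≤ n * (∑ k, (p * ∑ _ℓ : Fin p, (|R j k| * CF) ^ 2 * L)) := by positivity
    have hD : 0 ≤ n * (∑ _k : Fin n, CG ^ 2 * T) := by positivity
    have hE : 0 ≤ p * (∑ _k : Fin p, Cf ^ 2 * T) := by positivity
    have hz : 0 ≤ ∑ k, ζ (t - τ) k ^ 2 := by positivity
    have hw : 0 ≤ ∑ k, v (t - τ) k ^ 2 := by positivity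
    simp only [Kj]
    generalize (n * (∑ k, (p * ∑ _ℓ : Fin p, (|R j k| * CF) ^ 2 * L)) : ℝ) = C at *
    generalize (n * (∑ _k : Fin n, CG ^ 2 * T) : ℝ) = D at *
    generalize (p * (∑ _k : Fin p, Cf ^ 2 * T) : ℝ) = E at *
    generalize ∑ k, R j k ^ 2 = A at *
    generalize ∑ k, R' j k ^ 2 = B at *
    generalize ∑ k, ζ (t - τ) k ^ 2 = z at *
    generalize ∑ k, v (t - τ) k ^ 2 = w at *
    have hS : A * z + B * w + C * V + D * Z + E * V
        ≤ (A + B + C + D + E) * (z + w + (Z + V)) := by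
      have a1 : A * z ≤ A * (z + w + (Z + V)) := mul_le_mul_of_nonneg_left (by linarith) hA
      have a2 : B * w ≤ B * (z + w + (Z + V)) := mul_le_mul_of_nonneg_left (by linarith) hB
      have a3 : C * V ≤ C * (z + w + (Z + V)) := mul_le_mul_of_nonneg_left (by linarith) hC
      have a4 : D * Z ≤ D * (z + w + (Z + V)) := mul_le_mul_of_nonneg_left (by linarith) hD
      have a5 : E * V ≤ E * (z + w + (Z + V)) := mul_le_mul_of_nonneg_left (by linarith) hE
      linarith
    linarith
  have hcont : ∀ j, Continuous fun x : ℝ => Kj j *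
      ((∑ k, ζ (t - (1 - x) / μ j) k ^ 2) + (∑ k, v (t - (1 - x) / μ j) k ^ 2) + (Z + V)) :=
    fun j => by fun_prop
  -- Only the dominating function has to be integrable here, so no regularity of `β` is needed.
  have hstep : (∫ x in (0:ℝ)..1, ∑ j, (β t x j) ^ 2) ≤ ∫ x in (0:ℝ)..1, ∑ j, Kj j *
      ((∑ k, ζ (t - (1 - x) / μ j) k ^ 2) + (∑ k, v (t - (1 - x) / μ j) k ^ 2) + (Z + V)) := by
    rw [intervalIntegral.integral_of_le zero_le_one, intervalIntegral.integral_of_le zero_le_one]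
    refine integral_mono_of_nonneg
      (Filter.Eventually.of_forall fun x => Finset.sum_nonneg fun _ _ => sq_nonneg _) ?_ ?_
    · exact ((continuous_finsetSum _ fun j _ => hcont j).intervalIntegrable 0 1).1
    · refine (ae_restrict_iff' measurableSet_Ioc).mpr (Filter.Eventually.of_forall fun x hx => ?_)
      exact Finset.sum_le_sum fun j _ => hpt j x ⟨hx.1.le, hx.2⟩
  refine hstep.trans ?_
  rw [intervalIntegral.integral_finsetSum fun j _ => (hcont j).intervalIntegrable 0 1]
  have hfin : ∀ j, (∫ x in (0:ℝ)..1, Kj j *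
      ((∑ k, ζ (t - (1 - x) / μ j) k ^ 2) + (∑ k, v (t - (1 - x) / μ j) k ^ 2) + (Z + V)))
      ≤ Kj j * (μ j + 1) * (Z + V) := by
    intro j
    have h1 : ∫ x in (0:ℝ)..1, ∑ k, ζ (t - (1 - x) / μ j) k ^ 2 ≤ μ j * Z :=
      integral_delay_le (fun s => ∑ k, ζ s k ^ 2) (by fun_prop)
        (fun _ => Finset.sum_nonneg fun _ _ => sq_nonneg _) _ _ t (hμpos j) (by linarith [hTj j])
    have h2 : ∫ x in (0:ℝ)..1, ∑ k, v (t - (1 - x) / μ j) k ^ 2 ≤ μ j * V :=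
      integral_delay_le (fun s => ∑ k, v s k ^ 2) (by fun_prop)
        (fun _ => Finset.sum_nonneg fun _ _ => sq_nonneg _) _ _ t (hμpos j) (by linarith [hTj j])
    rw [intervalIntegral.integral_const_mul, intervalIntegral.integral_add,
      intervalIntegral.integral_add, intervalIntegral.integral_const, mul_assoc (Kj j)]
    · refine mul_le_mul_of_nonneg_left ?_ (hKj j)
      simp only [sub_zero, one_smul]
      linarith
    all_goals exact Continuous.intervalIntegrable (by fun_prop) _ _
  refine (Finset.sum_le_sum fun j _ => hfin j).trans ?_
  rw [← Finset.sum_mul]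
  exact mul_le_mul_of_nonneg_right (by linarith) (by linarith)
end

section
/- Let n ≥ 1, let 0 < λ_1 < λ_2 < … < λ_n be real transport speeds, and let Ǧ : [0,1] × [0, 1/λ_1] → M_n(ℝ) be continuous with Ǧ(x,ν)_{jℓ} = 0 whenever ℓ ≤ j. For continuous ζ : ℝ → ℝⁿ, define α : ℝ × [0,1] → ℝⁿ componentwise by α_j(t,x) = ζ_j(t + (1−x)/λ_j) + Σ_{ℓ=j+1}^n ∫_0^{(1−x)/λ_j} Ǧ(x,ν)_{jℓ} ζ_ℓ(t + ν) dν. Then there exists a constant K > 0, depending only on λ_1, …, λ_n and Ǧ, such that for every continuous ζ and every t ∈ ℝ: ∫_0^1 ‖α(t,x)‖² dx ≤ K ∫_t^{t + 1/λ_1} ‖ζ(s)‖² ds. -/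
open Matrix Set

/-!
The first term of `α_j` is a reparametrization of `ζ_j`: substituting `s = t + (1 - x)/λ_j` turns
`∫₀¹ ζ_j(t + (1 - x)/λ_j)² dx` into `λ_j ∫_t^{t + 1/λ_j} ζ_j²`, and `1/λ_j ≤ 1/λ_1`
(`integral_shift_le`). With `M` a bound for the entries of the kernel on its compact domain and
`T = 1/λ_1`, Cauchy–Schwarz bounds the square of each Volterra term by `M² T ∫_t^{t + T} ‖ζ‖²`,
uniformly in `x` (`sq_volterra_le`). Since `(a + b)² ≤ 2 a² + 2 b²`, the constant
`K = ∑_j (2 λ_j + 2 n² M² T)` works. The measurability of `α(t, ·)` plays no role: the integrand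
is nonnegative and dominated by a continuous function.
-/

open MeasureTheory

/-- Cauchy–Schwarz against the constant function `1`. -/
lemma sq_integral_le {T : ℝ} (hT : 0 < T) {f : ℝ → ℝ} (hf : Continuous f) :
    (∫ ν in (0:ℝ)..T, f ν) ^ 2 ≤ T * ∫ ν in (0:ℝ)..T, f ν ^ 2 := by
  set I := ∫ ν in (0:ℝ)..T, f ν with hI
  -- The variance of `f` about its mean `I / T` is nonnegative.
  have h0 : 0 ≤ ∫ ν in (0:ℝ)..T, (f ν - I / T) ^ 2 :=
    intervalIntegral.integral_nonneg hT.le fun _ _ => sq_nonneg _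
  have h1 : ∫ ν in (0:ℝ)..T, (f ν - I / T) ^ 2
      = (∫ ν in (0:ℝ)..T, f ν ^ 2) - 2 * (I / T) * I + T * (I / T) ^ 2 := by
    have : ∀ ν, (f ν - I / T) ^ 2 = f ν ^ 2 - 2 * (I / T) * f ν + (I / T) ^ 2 := fun ν => by ring
    simp_rw [this]
    rw [intervalIntegral.integral_add, intervalIntegral.integral_sub,
      intervalIntegral.integral_const_mul, intervalIntegral.integral_const, ← hI]
    · simp
    all_goals exact Continuous.intervalIntegrable (by fun_prop) _ _
  rw [h1] at h0
  have h2 : T * ((∫ ν in (0:ℝ)..T, f ν ^ 2) - 2 * (I / T) * I + T * (I / T) ^ 2)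
      = T * (∫ ν in (0:ℝ)..T, f ν ^ 2) - I ^ 2 := by
    field_simp
    ring
  have := mul_nonneg hT.le h0
  linarith

lemma integral_coord_le {n : ℕ} {ζ : ℝ → Fin n → ℝ} (hζ : Continuous ζ) (k : Fin n)
    {t r T : ℝ} (hr : 0 ≤ r) (hrT : r ≤ T) :
    ∫ s in t..(t + r), ζ s k ^ 2 ≤ ∫ s in t..(t + T), ∑ k, ζ s k ^ 2 := by
  calc ∫ s in t..(t + r), ζ s k ^ 2 ≤ ∫ s in t..(t + r), ∑ k, ζ s k ^ 2 := by
        apply intervalIntegral.integral_mono_on (by linarith)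
        · exact Continuous.intervalIntegrable (by fun_prop) _ _
        · exact Continuous.intervalIntegrable (by fun_prop) _ _
        · intro s _
          exact Finset.single_le_sum (f := fun k => ζ s k ^ 2) (fun _ _ => sq_nonneg _)
            (Finset.mem_univ k)
    _ ≤ _ := by
        apply intervalIntegral.integral_mono_interval le_rfl (by linarith) (by linarith)
        · exact Filter.Eventually.of_forall fun s => Finset.sum_nonneg fun _ _ => sq_nonneg _
        · exact Continuous.intervalIntegrable (by fun_prop) _ _

/-- The transport term: its `L²` norm over space is an `L²` norm of the trace over time. -/
lemma integral_shift_le {n : ℕ} {ζ : ℝ → Fin n → ℝ} (hζ : Continuous ζ) (k : Fin n)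
    {t c T : ℝ} (hc : 0 < c) (hcT : 1 / c ≤ T) :
    ∫ x in (0:ℝ)..1, ζ (t + (1 - x) / c) k ^ 2 ≤ c * ∫ s in t..(t + T), ∑ k, ζ s k ^ 2 := by
  have h : ∫ x in (0:ℝ)..1, ζ (t + (1 - x) / c) k ^ 2
      = c * ∫ s in t..(t + 1 / c), ζ s k ^ 2 := by
    have e : ∀ x : ℝ, t + (1 - x) / c = (t + 1 / c) - x / c := fun x => by ring
    simp_rw [e]
    rw [intervalIntegral.integral_comp_sub_div (fun s => ζ s k ^ 2) hc.ne']
    simp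
  rw [h]
  exact mul_le_mul_of_nonneg_left (integral_coord_le hζ k (by positivity) hcT) hc.le

/-- The Volterra term: no regularity of the kernel `g` beyond the bound `M` is needed. -/
lemma sq_volterra_le {n : ℕ} {ζ : ℝ → Fin n → ℝ} (hζ : Continuous ζ) (k : Fin n)
    {t y T M : ℝ} (hT : 0 < T) (hy : 0 ≤ y) (hyT : y ≤ T) (hM : 0 ≤ M) {g : ℝ → ℝ}
    (hg : ∀ ν ∈ Icc 0 T, |g ν| ≤ M) :
    (∫ ν in (0:ℝ)..y, g ν * ζ (t + ν) k) ^ 2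
      ≤ M ^ 2 * T * ∫ s in t..(t + T), ∑ k, ζ s k ^ 2 := by
  have hcont : Continuous fun ν => |ζ (t + ν) k| := by fun_prop
  have h1 : |∫ ν in (0:ℝ)..y, g ν * ζ (t + ν) k| ≤ M * ∫ ν in (0:ℝ)..T, |ζ (t + ν) k| := by
    calc |∫ ν in (0:ℝ)..y, g ν * ζ (t + ν) k| ≤ ∫ ν in (0:ℝ)..y, M * |ζ (t + ν) k| := by
          rw [← Real.norm_eq_abs]
          apply intervalIntegral.norm_integral_le_of_norm_le hy
          · refine Filter.Eventually.of_forall fun ν hν => ?_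
            rw [Real.norm_eq_abs, abs_mul]
            exact mul_le_mul_of_nonneg_right (hg ν ⟨hν.1.le, hν.2.trans hyT⟩) (abs_nonneg _)
          · exact Continuous.intervalIntegrable (by fun_prop) _ _
      _ = M * ∫ ν in (0:ℝ)..y, |ζ (t + ν) k| := intervalIntegral.integral_const_mul _ _
      _ ≤ _ := by
          refine mul_le_mul_of_nonneg_left ?_ hM
          apply intervalIntegral.integral_mono_interval le_rfl hy hyT
          · exact Filter.Eventually.of_forall fun s => abs_nonneg _
          · exact hcont.intervalIntegrable _ _
  have h2 := sq_integral_le hT hcont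
  have h3 : ∫ ν in (0:ℝ)..T, |ζ (t + ν) k| ^ 2 = ∫ s in t..(t + T), ζ s k ^ 2 := by
    simp_rw [sq_abs]
    rw [intervalIntegral.integral_comp_add_left (fun s => ζ s k ^ 2)]
    simp
  have h4 := integral_coord_le hζ k (t := t) hT.le le_rfl
  rw [← sq_abs]
  calc _ ≤ (M * ∫ ν in (0:ℝ)..T, |ζ (t + ν) k|) ^ 2 := by gcongr
    _ = M ^ 2 * (∫ ν in (0:ℝ)..T, |ζ (t + ν) k|) ^ 2 := by ring
    _ ≤ M ^ 2 * (T * ∫ s in t..(t + T), ∑ k, ζ s k ^ 2) := by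
        refine mul_le_mul_of_nonneg_left (h2.trans ?_) (sq_nonneg _)
        rw [h3]
        exact mul_le_mul_of_nonneg_left h4 hT.le
    _ = _ := by ring

/-- the `L²` bound on the rightward-traveling target state `α`
established in the proof of Property 2 of the paper: for the closed
characteristic representation of `α` in terms of its right boundary trace
`ζ = α(·,1)`, the spatial `L²`-norm of `α(t,·)` is bounded by the `L²`-norm of
`ζ` over `[t, t + 1/λ_1]`, with a constant independent of `ζ` and `t`. -/
theorem stmt8 (n : ℕ) (hn : 1 ≤ n) (lam : Fin n → ℝ)
    (hpos : ∀ j, 0 < lam j) (hmono : StrictMono lam)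
    (Gc : ℝ → ℝ → Matrix (Fin n) (Fin n) ℝ)
    (hGcCont : ContinuousOn (fun q : ℝ × ℝ => Gc q.1 q.2)
      (Icc (0:ℝ) 1 ×ˢ Icc (0:ℝ) (1 / lam ⟨0, hn⟩)))
    (hGcTri : ∀ x ν : ℝ, ∀ j ℓ : Fin n, ℓ ≤ j → Gc x ν j ℓ = 0) :
    ∃ K : ℝ, 0 < K ∧
      ∀ ζ : ℝ → Fin n → ℝ, Continuous ζ →
        ∀ α : ℝ → ℝ → Fin n → ℝ,
        (∀ (t x : ℝ) (j : Fin n), α t x j =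
            ζ (t + (1 - x) / lam j) j
            + ∑ ℓ ∈ Finset.univ.filter (fun ℓ => j < ℓ),
                ∫ ν in (0:ℝ)..((1 - x) / lam j), Gc x ν j ℓ * ζ (t + ν) ℓ) →
        ∀ t : ℝ,
          (∫ x in (0:ℝ)..1, ∑ j, (α t x j) ^ 2)
            ≤ K * ∫ s in t..(t + 1 / lam ⟨0, hn⟩), ∑ k, (ζ s k) ^ 2 := by
  have hn0 : 0 < n := hn
  set T := 1 / lam ⟨0, hn⟩ with hTdef
  have hT : 0 < T := one_div_pos.2 (hpos _)
  have hlamT : ∀ j, 1 / lam j ≤ T := fun j =>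
    one_div_le_one_div_of_le (hpos _) (hmono.monotone (Fin.mk_le_of_le_val (Nat.zero_le _)))
  obtain ⟨M, hM0, hM⟩ : ∃ M : ℝ, 0 ≤ M ∧
      ∀ x ∈ Icc (0:ℝ) 1, ∀ ν ∈ Icc 0 T, ∀ j ℓ, |Gc x ν j ℓ| ≤ M := by
    -- `Matrix` carries no global norm, so the bound is taken in the sup norm of the function type.
    obtain ⟨M, hM⟩ := (isCompact_Icc.prod isCompact_Icc).exists_bound_of_continuousOn
      (E := Fin n → Fin n → ℝ)
      (f := fun q : ℝ × ℝ => fun j ℓ => Gc q.1 q.2 j ℓ) hGcCont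
    refine ⟨max M 0, le_max_right _ _, fun x hx ν hν j ℓ => ?_⟩
    refine le_trans ?_ ((hM (x, ν) ⟨hx, hν⟩).trans (le_max_left _ _))
    exact (norm_le_pi_norm (Gc x ν j) ℓ).trans
      (norm_le_pi_norm (fun j ℓ => Gc x ν j ℓ) j)
  refine ⟨∑ j, (2 * lam j + 2 * (n ^ 2 * (M ^ 2 * T))),
    Finset.sum_pos (fun j _ => ?_) ⟨⟨0, hn⟩, Finset.mem_univ _⟩, ?_⟩
  · have := hpos j
    positivity
  intro ζ hζ α hα t
  set E := ∫ s in t..(t + T), ∑ k, ζ s k ^ 2 with hE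
  have hE0 : 0 ≤ E := intervalIntegral.integral_nonneg (by linarith)
    fun _ _ => Finset.sum_nonneg fun _ _ => sq_nonneg _
  have hpt : ∀ x ∈ Ioc (0:ℝ) 1, ∀ j, α t x j ^ 2
      ≤ 2 * ζ (t + (1 - x) / lam j) j ^ 2 + 2 * (n ^ 2 * (M ^ 2 * T)) * E := by
    intro x hx j
    have hy : 0 ≤ (1 - x) / lam j := div_nonneg (by linarith [hx.2]) (hpos j).le
    have hyT : (1 - x) / lam j ≤ T :=
      (div_le_div_of_nonneg_right (by linarith [hx.1]) (hpos j).le).trans (hlamT j)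
    rw [hα]
    set F := Finset.univ.filter (fun ℓ => j < ℓ)
    have hcard : (F.card : ℝ) ≤ n := by
      exact_mod_cast (Finset.card_le_univ F).trans_eq (Fintype.card_fin n)
    have hS : (∑ ℓ ∈ F, ∫ ν in (0:ℝ)..((1 - x) / lam j), Gc x ν j ℓ * ζ (t + ν) ℓ) ^ 2
        ≤ n ^ 2 * (M ^ 2 * T * E) := by
      have hB : 0 ≤ M ^ 2 * T * E := by positivity
      calc _ ≤ (F.card : ℝ) * ∑ ℓ ∈ F,
              (∫ ν in (0:ℝ)..((1 - x) / lam j), Gc x ν j ℓ * ζ (t + ν) ℓ) ^ 2 :=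
            sq_sum_le_card_mul_sum_sq
        _ ≤ F.card * ∑ ℓ ∈ F, M ^ 2 * T * E := by
            gcongr with ℓ _
            exact sq_volterra_le hζ ℓ hT hy hyT hM0
              fun ν hν => hM x ⟨hx.1.le, hx.2⟩ ν hν j ℓ
        _ = (F.card : ℝ) ^ 2 * (M ^ 2 * T * E) := by
            rw [Finset.sum_const, nsmul_eq_mul]
            ring
        _ ≤ _ := by gcongr
    refine add_sq_le.trans ?_
    linarith
  calc ∫ x in (0:ℝ)..1, ∑ j, α t x j ^ 2
      ≤ ∫ x in (0:ℝ)..1, ∑ j, (2 * ζ (t + (1 - x) / lam j) j ^ 2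
          + 2 * (n ^ 2 * (M ^ 2 * T)) * E) := by
        rw [intervalIntegral.integral_of_le zero_le_one, intervalIntegral.integral_of_le zero_le_one]
        -- This form of monotonicity asks for integrability of the dominating function only.
        apply integral_mono_of_nonneg
        · exact Filter.Eventually.of_forall fun x => Finset.sum_nonneg fun _ _ => sq_nonneg _
        · exact (Continuous.integrableOn_Icc (by fun_prop)).mono_set Ioc_subset_Icc_self
        · exact (ae_restrict_iff' measurableSet_Ioc).2 <| Filter.Eventually.of_forall
            fun x hx => Finset.sum_le_sum fun j _ => hpt x hx j
    _ = ∑ j, (2 * (∫ x in (0:ℝ)..1, ζ (t + (1 - x) / lam j) j ^ 2)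
          + 2 * (n ^ 2 * (M ^ 2 * T)) * E) := by
        rw [intervalIntegral.integral_finsetSum]
        · refine Finset.sum_congr rfl fun j _ => ?_
          rw [intervalIntegral.integral_add, intervalIntegral.integral_const_mul,
            intervalIntegral.integral_const]
          · simp
          all_goals exact Continuous.intervalIntegrable (by fun_prop) _ _
        · intro j _
          exact Continuous.intervalIntegrable (by fun_prop) _ _
    _ ≤ ∑ j, (2 * lam j + 2 * (n ^ 2 * (M ^ 2 * T))) * E := by
        refine Finset.sum_le_sum fun j _ => ?_
        have := integral_shift_le hζ j (t := t) (hpos j) (hlamT j)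
        linarith
    _ = _ := by rw [Finset.sum_mul]
end

section
/- Let m ≥ 1, τ > 0, K ∈ ℕ, let A_1, …, A_K ∈ M_m(ℝ), let d_1, …, d_K ∈ (0, τ], let g : [0, τ] → M_m(ℝ) be continuous, and let a < b be real numbers. Suppose p : [a − τ, b] → ℝᵐ is continuous, p(s) = 0 for all s ∈ [a − τ, a], and for all s ∈ (a, b]: p(s) = Σ_{k=1}^K A_k p(s − d_k) + ∫_0^τ g(ν) p(s − ν) dν. Then p(s) = 0 for all s ∈ [a, b]. -/
open Matrix Set

/-!
The proof is the method of steps. Let `C` bound the operator norm of `g` on `[0, τ]`, and fix a step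
`η > 0` not exceeding `τ` or any delay `d k`, with `C * η < 1`. If `p` vanishes up to time `c`, then
for `s ∈ (c, c + η]` all the discrete terms vanish, since `s - d k ≤ c`, and the integral only sees
`ν ∈ [0, η]`, since `s - ν ≤ c` for `ν ≥ η`. At a point where `‖p‖` is maximal on `[c, c + η]` this
gives `M ≤ C * η * M`, hence `M = 0` (`vanish_step`). Iterating covers `[a, b]`.
-/

open scoped Matrix.Norms.Operator in
/-- On `[0, τ]` the maps `v ↦ g ν *ᵥ v` are bounded uniformly in `ν`. -/
lemma exists_mulVec_bound {m : ℕ} {τ : ℝ} {g : ℝ → Matrix (Fin m) (Fin m) ℝ}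
    (hg : ContinuousOn g (Icc (0:ℝ) τ)) :
    ∃ C : ℝ, 0 ≤ C ∧ ∀ ν ∈ Icc (0:ℝ) τ, ∀ v : Fin m → ℝ, ‖g ν *ᵥ v‖ ≤ C * ‖v‖ := by
  obtain ⟨C, hC⟩ := isCompact_Icc.exists_bound_of_continuousOn hg
  refine ⟨max C 0, le_max_right _ _, fun ν hν v => ?_⟩
  refine (Matrix.linfty_opNorm_mulVec (g ν) v).trans ?_
  gcongr
  exact (hC ν hν).trans (le_max_left _ _)

/-- A step length shorter than every delay, for which the Volterra term is a contraction. -/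
lemma exists_step {τ : ℝ} (hτ : 0 < τ) {K : ℕ} {d : Fin K → ℝ}
    (hd : ∀ k, d k ∈ Ioc (0:ℝ) τ) (C : ℝ) :
    ∃ η : ℝ, 0 < η ∧ η ≤ τ ∧ (∀ k, η ≤ d k) ∧ C * η < 1 := by
  have h1 : ∀ᶠ η in nhdsWithin (0:ℝ) (Ioi 0), η ≤ τ :=
    nhdsWithin_le_nhds (eventually_le_nhds hτ)
  have h2 : ∀ᶠ η in nhdsWithin (0:ℝ) (Ioi 0), ∀ k, η ≤ d k :=
    Filter.eventually_all.2 fun k => nhdsWithin_le_nhds (eventually_le_nhds (hd k).1)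
  have h3 : ∀ᶠ η in nhdsWithin (0:ℝ) (Ioi 0), C * η < 1 := by
    have hc : ContinuousAt (fun η : ℝ => C * η) 0 := by fun_prop
    exact nhdsWithin_le_nhds (hc.eventually_lt continuousAt_const (by simp))
  obtain ⟨η, ⟨⟨h1, h2⟩, h3⟩, h0⟩ := (((h1.and h2).and h3).and self_mem_nhdsWithin).exists
  exact ⟨η, h0, h1, h2, h3⟩

/-- One step of the method of steps: vanishing up to `c` propagates to `[c, c']`, `c' ≤ c + η`. -/
lemma vanish_step {m : ℕ} {τ : ℝ} {K : ℕ}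
    {A : Fin K → Matrix (Fin m) (Fin m) ℝ}
    {d : Fin K → ℝ} (hd : ∀ k, d k ∈ Ioc (0:ℝ) τ)
    {g : ℝ → Matrix (Fin m) (Fin m) ℝ} (hg : ContinuousOn g (Icc (0:ℝ) τ))
    {a b : ℝ} {p : ℝ → Fin m → ℝ} (hp : ContinuousOn p (Icc (a - τ) b))
    (heq : ∀ s ∈ Ioc a b,
      p s = (∑ k, A k *ᵥ p (s - d k)) + ∫ ν in (0:ℝ)..τ, g ν *ᵥ p (s - ν))
    {C η : ℝ} (hC0 : 0 ≤ C)
    (hC : ∀ ν ∈ Icc (0:ℝ) τ, ∀ v : Fin m → ℝ, ‖g ν *ᵥ v‖ ≤ C * ‖v‖)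
    (hη : 0 < η) (hητ : η ≤ τ) (hηd : ∀ k, η ≤ d k) (hCη : C * η < 1)
    {c c' : ℝ} (hac : a ≤ c) (hcc' : c ≤ c') (hc'η : c' ≤ c + η) (hc'b : c' ≤ b)
    (hz : ∀ s ∈ Icc (a - τ) c, p s = 0) :
    ∀ s ∈ Icc (a - τ) c', p s = 0 := by
  obtain ⟨s₀, hs₀, hmax⟩ := isCompact_Icc.exists_isMaxOn (nonempty_Icc.2 hcc')
    (hp.mono (Icc_subset_Icc (by linarith) hc'b) : ContinuousOn p (Icc c c')).norm
  have hmax' : ∀ s ∈ Icc (a - τ) c', ‖p s‖ ≤ ‖p s₀‖ := by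
    intro s hs
    rcases le_total s c with h | h
    · rw [hz s ⟨hs.1, h⟩, norm_zero]
      exact norm_nonneg _
    · exact hmax ⟨h, hs.2⟩
  suffices h0 : p s₀ = 0 by
    intro s hs
    have := hmax' s hs
    rw [h0, norm_zero] at this
    exact norm_le_zero_iff.1 this
  rcases hs₀.1.eq_or_lt with h | h
  · exact hz s₀ ⟨by linarith, h.ge⟩
  have hs := heq s₀ ⟨by linarith, hs₀.2.trans hc'b⟩
  have hsum : ∑ k, A k *ᵥ p (s₀ - d k) = 0 := by
    refine Finset.sum_eq_zero fun k _ => ?_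
    rw [hz (s₀ - d k) ⟨by linarith [(hd k).2], by linarith [hηd k, hs₀.2]⟩, mulVec_zero]
  have hcont : ContinuousOn (fun ν => g ν *ᵥ p (s₀ - ν)) (Icc 0 τ) := by
    have hps : ContinuousOn (fun ν => p (s₀ - ν)) (Icc 0 τ) :=
      hp.comp (by fun_prop) fun ν hν => ⟨by linarith [hν.2], by linarith [hν.1, hs₀.2]⟩
    exact (continuous_fst.matrix_mulVec continuous_snd).comp_continuousOn (hg.prodMk hps)
  have hi1 : IntervalIntegrable (fun ν => g ν *ᵥ p (s₀ - ν)) MeasureTheory.volume 0 η :=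
    (hcont.mono (Icc_subset_Icc le_rfl hητ)).intervalIntegrable_of_Icc hη.le
  have hi2 : IntervalIntegrable (fun ν => g ν *ᵥ p (s₀ - ν)) MeasureTheory.volume η τ :=
    (hcont.mono (Icc_subset_Icc hη.le le_rfl)).intervalIntegrable_of_Icc hητ
  have htail : ∫ ν in η..τ, g ν *ᵥ p (s₀ - ν) = 0 := by
    rw [intervalIntegral.integral_congr (g := fun _ => 0), intervalIntegral.integral_zero]
    intro ν hν
    rw [uIcc_of_le hητ] at hν
    change g ν *ᵥ p (s₀ - ν) = 0
    rw [hz (s₀ - ν) ⟨by linarith [hν.2], by linarith [hν.1, hs₀.2]⟩, mulVec_zero]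
  have hhead : ‖∫ ν in (0:ℝ)..η, g ν *ᵥ p (s₀ - ν)‖ ≤ C * ‖p s₀‖ * |η - 0| := by
    refine intervalIntegral.norm_integral_le_of_norm_le_const fun ν hν => ?_
    rw [uIoc_of_le hη.le] at hν
    refine (hC ν ⟨hν.1.le, hν.2.trans hητ⟩ _).trans ?_
    gcongr
    exact hmax' _ ⟨by linarith [hν.2], by linarith [hν.1, hs₀.2]⟩
  rw [hsum, zero_add, ← intervalIntegral.integral_add_adjacent_intervals hi1 hi2, htail,
    add_zero] at hs
  rw [← hs, sub_zero, abs_of_pos hη] at hhead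
  refine norm_le_zero_iff.1 ?_
  nlinarith [norm_nonneg (p s₀)]

/-- uniqueness of solutions for the integral difference equation
(discrete delays plus a Volterra distributed-delay term) underlying the
time-delay representation of the boundary traces of the hyperbolic subsystems:
a continuous solution that vanishes on the initial interval `[a−τ, a]` vanishes
on all of `[a, b]`. -/
theorem stmt10 (m : ℕ) (hm : 1 ≤ m) (τ : ℝ) (hτ : 0 < τ) (K : ℕ)
    (A : Fin K → Matrix (Fin m) (Fin m) ℝ)
    (d : Fin K → ℝ) (hd : ∀ k, d k ∈ Ioc (0:ℝ) τ)
    (g : ℝ → Matrix (Fin m) (Fin m) ℝ) (hg : ContinuousOn g (Icc (0:ℝ) τ))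
    (a b : ℝ) (hab : a < b)
    (p : ℝ → Fin m → ℝ) (hp : ContinuousOn p (Icc (a - τ) b))
    (hzero : ∀ s ∈ Icc (a - τ) a, p s = 0)
    (heq : ∀ s ∈ Ioc a b,
      p s = (∑ k, A k *ᵥ p (s - d k)) + ∫ ν in (0:ℝ)..τ, g ν *ᵥ p (s - ν)) :
    ∀ s ∈ Icc a b, p s = 0 := by
  obtain ⟨C, hC0, hC⟩ := exists_mulVec_bound hg
  obtain ⟨η, hη, hητ, hηd, hCη⟩ := exists_step hτ hd C
  have key : ∀ n : ℕ, ∀ s ∈ Icc (a - τ) (min (a + n * η) b), p s = 0 := by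
    intro n
    induction n with
    | zero =>
      intro s hs
      exact hzero s ⟨hs.1, by simpa using hs.2.trans (min_le_left _ _)⟩
    | succ n ih =>
      have hn : 0 ≤ n * η := by positivity
      push_cast
      refine vanish_step hd hg hp heq hC0 hC hη hητ hηd hCη
        (le_min (by linarith) hab.le) (min_le_min_right _ (by linarith)) ?_
        (min_le_right _ _) ih
      rw [← min_add_add_right]
      exact min_le_min (by linarith) (by linarith)
  obtain ⟨n, hn⟩ := exists_nat_ge ((b - a) / η)
  rw [div_le_iff₀ hη] at hn
  intro s hs
  exact key n s ⟨by linarith [hs.1], le_min (by linarith [hs.2]) hs.2⟩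
end
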